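/- arXiv:2208.03745 — 4 statements merged into one kernel-verified Lean document; each statement's English description precedes it below -/
import Mathlib

section
/- For every finite distributive lattice D there exists a finite sectionally complemented lattice L such that D is isomorphic (as a lattice, equivalently as an order) to the lattice of all congruences of L ordered by inclusion. -/
/-!
By Birkhoff's theorem `D` is the lattice of lower sets of the finite poset `P` of its
join-irreducible elements, so it suffices to find, for each finite poset `P`, a finite
sectionally complemented lattice whose congruences correspond to the lower sets of `P`.

Let `M₃` be the five-element lattice with three atoms, and let `L` consist of the functions
`f : P → M₃` such that `f q ∈ {⊥, ⊤}` whenever `q < p` for some `p` with `f p ≠ ⊥`. Meets in `L`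
are pointwise. The join of `f` and `g` is the pointwise join, except that its value at `q` is raised
to `⊤` if it is nonzero both at `q` and somewhere above `q`; raising leaves the support unchanged,
so one step suffices.

* A lower set `I` yields the congruence "equal off `I`": the join at `q` depends only on the values
  at points `≥ q`, and the complement of `I` is an upper set.
* Conversely, for a congruence `r` let `I` be the set of those `p` for which the function with
  value `⊤` at `p` and `⊥` elsewhere is congruent to `⊥`. As `M₃` is simple, any nonzero value in
  place of `⊤` gives the same set. If `q < p ∈ I` and `a ≠ b` are atoms of `M₃`, then joining `a`
  at `q` with `⊤` at `p` gives `⊤` at `q`; meeting with `b` at `q` shows `q ∈ I`, so `I` is a lower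
  set. The largest element `k` congruent to `⊥` is `⊤` on `I` and `⊥` off `I`, and `f ⊔ k = g ⊔ k`
  whenever `f = g` off `I`; hence `r` is equality off `I`.
* A sectional complement of `u` in `v` is taken pointwise, except that it is `⊥` at those `p`
  with `u p ≠ ⊥` above which `v` is somewhere nonzero: there the join is raised to `⊤ = v p`.
-/

/-- A lattice with least element is sectionally complemented if every interval
`[⊥, v]` is complemented: for `u ≤ v` there is `s` with `u ⊓ s = ⊥` and `u ⊔ s = v`. -/
def SectionallyComplemented (L : Type*) [Lattice L] [OrderBot L] : Prop :=
  ∀ u v : L, u ≤ v → ∃ s : L, u ⊓ s = ⊥ ∧ u ⊔ s = v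

/-- A congruence of a lattice: an equivalence relation preserving joins and meets. -/
structure IsLatticeCongruence {L : Type*} [Lattice L] (r : L → L → Prop) : Prop where
  refl : ∀ a, r a a
  symm : ∀ {a b}, r a b → r b a
  trans : ∀ {a b c}, r a b → r b c → r a c
  sup : ∀ {a b c d}, r a b → r c d → r (a ⊔ c) (b ⊔ d)
  inf : ∀ {a b c d}, r a b → r c d → r (a ⊓ c) (b ⊓ d)

/-! ### The lattice `M₃` -/

/-- The five-element modular lattice with three atoms `a`, `b`, `c`. -/
inductive MThree : Type
  | zero | a | b | c | one
  deriving DecidableEq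

namespace MThree

instance : Fintype MThree where
  elems := {zero, a, b, c, one}
  complete x := by cases x <;> decide

/-- The join of `M₃`: two distinct nonzero elements join to the top. -/
def join : MThree → MThree → MThree
  | zero, y => y
  | x, zero => x
  | x, y => if x = y then x else one

/-- The meet of `M₃`: two distinct elements different from the top meet in the bottom. -/
def meet : MThree → MThree → MThree
  | one, y => y
  | x, one => x
  | x, y => if x = y then x else zero

instance : Lattice MThree where
  le x y := meet x y = x
  le_refl := by decide
  le_trans := by decide
  le_antisymm := by decide
  sup := join
  inf := meet
  le_sup_left := by decide
  le_sup_right := by decide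
  sup_le := by decide
  inf_le_left := by decide
  inf_le_right := by decide
  le_inf := by decide

instance : DecidableLE MThree := fun x y => inferInstanceAs (Decidable (meet x y = x))

instance : BoundedOrder MThree where
  top := one
  bot := zero
  le_top := by decide
  bot_le := by decide

theorem exists_separating : ∀ x y : MThree, ¬ x ≤ y → ∃ z, z ≠ ⊥ ∧ z ≤ x ∧ z ⊓ y = ⊥ := by decide

theorem exists_compl : ∀ u v : MThree, u ≤ v → ∃ s, u ⊓ s = ⊥ ∧ u ⊔ s = v := by decide

/-- The elements witnessing that `M₃` is simple: if `x` is congruent to `⊥`, then so is `z`, by way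
of `y`, and hence so is `x ⊔ z = ⊤`. -/
theorem exists_simple : ∀ x : MThree, x ≠ ⊥ → ∃ y z, x ⊔ y = ⊤ ∧ y ⊓ z = ⊥ ∧ x ⊔ z = ⊤ := by
  decide

theorem bot_ne_top : (⊥ : MThree) ≠ ⊤ := by decide

end MThree

/-! ### The lattice attached to a poset -/

/-- The functions `P → M₃` taking only the values `⊥` and `⊤` strictly below their support. -/
def PosetLat (P : Type) [PartialOrder P] : Type :=
  {f : P → MThree // ∀ p q, q < p → f p ≠ ⊥ → f q = ⊥ ∨ f q = ⊤}

namespace PosetLat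

variable {P : Type} [PartialOrder P]

instance : FunLike (PosetLat P) P MThree where
  coe f := f.1
  coe_injective _ _ h := Subtype.ext h

theorem dichotomy (f : PosetLat P) {p q : P} (h : q < p) (hp : f p ≠ ⊥) : f q = ⊥ ∨ f q = ⊤ :=
  f.2 p q h hp

open Classical in
/-- The values of the join: the pointwise join, raised to `⊤` at the points of its support that lie
strictly below other points of its support. -/
noncomputable def joinFun (f g : PosetLat P) (q : P) : MThree :=
  if f q ⊔ g q ≠ ⊥ ∧ ∃ p, q < p ∧ f p ⊔ g p ≠ ⊥ then ⊤ else f q ⊔ g q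

theorem joinFun_eq_bot {f g : PosetLat P} {q : P} : joinFun f g q = ⊥ ↔ f q ⊔ g q = ⊥ := by
  unfold joinFun
  by_cases h : f q ⊔ g q ≠ ⊥ ∧ ∃ p, q < p ∧ f p ⊔ g p ≠ ⊥
  · rw [if_pos h]
    exact iff_of_false MThree.bot_ne_top.symm h.1
  · rw [if_neg h]

theorem le_joinFun (f g : PosetLat P) (q : P) : f q ⊔ g q ≤ joinFun f g q := by
  unfold joinFun
  split_ifs with h
  · exact le_top
  · exact le_rfl

noncomputable instance : Lattice (PosetLat P) where
  le f g := ∀ p, f p ≤ g p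
  le_refl f p := le_rfl
  le_trans f g h h₁ h₂ p := (h₁ p).trans (h₂ p)
  le_antisymm f g h₁ h₂ := DFunLike.ext _ _ fun p => (h₁ p).antisymm (h₂ p)
  sup f g := ⟨joinFun f g, fun p q hqp hp => by
    by_cases hq : f q ⊔ g q = ⊥
    · exact Or.inl (joinFun_eq_bot.2 hq)
    · right
      unfold joinFun
      rw [if_pos ⟨hq, p, hqp, fun h => hp (joinFun_eq_bot.2 h)⟩]⟩
  inf f g := ⟨fun p => f p ⊓ g p, fun p q hqp hp => by
    have hf : f p ≠ ⊥ := fun h => hp (by simp [h])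
    have hg : g p ≠ ⊥ := fun h => hp (by simp [h])
    rcases f.dichotomy hqp hf with h | h <;> rcases g.dichotomy hqp hg with h' | h' <;>
      simp [h, h']⟩
  le_sup_left f g p := le_sup_left.trans (le_joinFun f g p)
  le_sup_right f g p := le_sup_right.trans (le_joinFun f g p)
  sup_le f g k hf hg q := by
    change joinFun f g q ≤ k q
    have hle : ∀ p, f p ⊔ g p ≤ k p := fun p => sup_le (hf p) (hg p)
    unfold joinFun
    split_ifs with h
    · obtain ⟨hq, p, hqp, hp⟩ := h
      rcases k.dichotomy hqp (ne_bot_of_le_ne_bot hp (hle p)) with h | h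
      · exact absurd h (ne_bot_of_le_ne_bot hq (hle q))
      · exact h.ge
    · exact hle q
  inf_le_left f g p := inf_le_left
  inf_le_right f g p := inf_le_right
  le_inf f g k h₁ h₂ p := le_inf (h₁ p) (h₂ p)

instance : OrderBot (PosetLat P) where
  bot := ⟨fun _ => ⊥, fun _ _ _ _ => Or.inl rfl⟩
  bot_le _ _ := bot_le

theorem le_iff {f g : PosetLat P} : f ≤ g ↔ ∀ p, f p ≤ g p := Iff.rfl

theorem inf_apply (f g : PosetLat P) (p : P) : (f ⊓ g) p = f p ⊓ g p := rfl

theorem bot_apply (p : P) : (⊥ : PosetLat P) p = ⊥ := rfl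

theorem sup_apply (f g : PosetLat P) (p : P) : (f ⊔ g) p = joinFun f g p := rfl

theorem le_sup_apply (f g : PosetLat P) (p : P) : f p ⊔ g p ≤ (f ⊔ g) p := le_joinFun f g p

theorem sup_apply_eq_top (f g : PosetLat P) {p q : P} (hq : f q ⊔ g q ≠ ⊥) (hqp : q < p)
    (hp : f p ⊔ g p ≠ ⊥) : (f ⊔ g) q = ⊤ := by
  rw [sup_apply, joinFun, if_pos ⟨hq, p, hqp, hp⟩]

/-- The join at `q` depends only on the values at the points above `q`. -/
theorem sup_apply_congr {f f' g g' : PosetLat P} {q : P} (hf : ∀ p, q ≤ p → f p = f' p)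
    (hg : ∀ p, q ≤ p → g p = g' p) : (f ⊔ g) q = (f' ⊔ g') q := by
  classical
  have hex : (∃ p, q < p ∧ f p ⊔ g p ≠ ⊥) ↔ ∃ p, q < p ∧ f' p ⊔ g' p ≠ ⊥ :=
    exists_congr fun p => and_congr_right fun h => by rw [hf p h.le, hg p h.le]
  rw [sup_apply, sup_apply, joinFun, joinFun, hf q le_rfl, hg q le_rfl]
  exact if_congr (and_congr_right fun _ => hex) rfl rfl

theorem sup_bot_apply_congr {f k : PosetLat P} {q : P} (hk : ∀ p, q ≤ p → k p = ⊥) :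
    (f ⊔ k) q = f q := by
  rw [sup_apply_congr (f' := f) (g' := ⊥) (fun _ _ => rfl) hk, sup_bot_eq]

/-! ### Sectional complements -/

theorem sectionallyComplemented : SectionallyComplemented (PosetLat P) := by
  classical
  intro u v huv
  have hc : ∀ p, ∃ s, u p ⊓ s = ⊥ ∧ u p ⊔ s = v p := fun p => MThree.exists_compl _ _ (huv p)
  choose c hc₁ hc₂ using hc
  have hcv : ∀ p, c p ≤ v p := fun p => hc₂ p ▸ le_sup_right
  let s : PosetLat P :=
    ⟨fun p => if (∃ p', p < p' ∧ v p' ≠ ⊥) ∧ u p ≠ ⊥ then ⊥ else c p, fun p q hqp hp => by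
      have hvp : v p ≠ ⊥ := by
        dsimp only at hp
        split_ifs at hp with h
        · exact absurd rfl hp
        · exact ne_bot_of_le_ne_bot hp (hcv p)
      by_cases hu : u q = ⊥
      · have hcq : c q = v q := by simpa [hu] using hc₂ q
        simpa [hu, hcq] using v.dichotomy hqp hvp
      · exact Or.inl (if_pos ⟨⟨p, hqp, hvp⟩, hu⟩)⟩
  have hs : ∀ p, s p = if (∃ p', p < p' ∧ v p' ≠ ⊥) ∧ u p ≠ ⊥ then ⊥ else c p := fun _ => rfl
  have hsv : s ≤ v := fun p => by
    rw [hs]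
    split_ifs
    · exact bot_le
    · exact hcv p
  -- `u` and `s` together have the support of `v`.
  have hsupp : ∀ p, v p ≠ ⊥ → u p ⊔ s p ≠ ⊥ := fun p hp => by
    rw [hs]
    split_ifs with h
    · simpa using h.2
    · rwa [hc₂]
  refine ⟨s, DFunLike.ext _ _ fun p => ?_, le_antisymm (sup_le huv hsv) fun p => ?_⟩
  · rw [inf_apply, hs, bot_apply]
    split_ifs
    · exact inf_bot_eq _
    · exact hc₁ p
  · by_cases h : (∃ p', p < p' ∧ v p' ≠ ⊥) ∧ u p ≠ ⊥
    · obtain ⟨⟨p', hpp', hp'⟩, hu⟩ := h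
      rw [sup_apply_eq_top u s (hsupp p (ne_bot_of_le_ne_bot hu (huv p))) hpp' (hsupp p' hp')]
      exact le_top
    · refine le_trans (le_of_eq ?_) (le_sup_apply u s p)
      rw [hs, if_neg h, hc₂]

/-! ### Functions supported at one point -/

open Classical in
/-- The function with value `x` at `p` and `⊥` elsewhere. -/
noncomputable def single (p : P) (x : MThree) : PosetLat P :=
  ⟨fun q => if q = p then x else ⊥, fun p' q hq hp' => by
    left
    have : p' = p := by
      by_contra h
      exact hp' (if_neg h)
    exact if_neg (this ▸ hq.ne)⟩

theorem single_same (p : P) (x : MThree) : single p x p = x := if_pos rfl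

theorem single_ne {p q : P} (h : q ≠ p) (x : MThree) : single p x q = ⊥ := if_neg h

theorem single_le_iff {p : P} {x : MThree} {f : PosetLat P} : single p x ≤ f ↔ x ≤ f p := by
  refine ⟨fun h => (single_same p x).ge.trans (h p), fun h q => ?_⟩
  by_cases hq : q = p
  · subst hq
    rwa [single_same]
  · rw [single_ne hq]
    exact bot_le

theorem single_inf (p : P) (x : MThree) (f : PosetLat P) :
    single p x ⊓ f = single p (x ⊓ f p) := by
  refine DFunLike.ext _ _ fun q => ?_
  by_cases hq : q = p
  · subst hq
    rw [inf_apply, single_same, single_same]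
  · rw [inf_apply, single_ne hq, single_ne hq, bot_inf_eq]

theorem single_bot (p : P) : single p ⊥ = ⊥ :=
  le_bot_iff.1 (single_le_iff.2 bot_le)

theorem single_sup (p : P) (x y : MThree) : single p x ⊔ single p y = single p (x ⊔ y) := by
  apply le_antisymm
  · exact sup_le (single_le_iff.2 (by rw [single_same]; exact le_sup_left))
      (single_le_iff.2 (by rw [single_same]; exact le_sup_right))
  · refine single_le_iff.2 (le_trans (le_of_eq ?_) (le_sup_apply _ _ p))
    rw [single_same, single_same]

/-! ### Congruences and lower sets -/

/-- Equality off `I`. -/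
def EqOff (I : LowerSet P) (f g : PosetLat P) : Prop := ∀ p, p ∉ I → f p = g p

theorem eqOff_isLatticeCongruence (I : LowerSet P) :
    IsLatticeCongruence (EqOff I) where
  refl _ _ _ := rfl
  symm h p hp := (h p hp).symm
  trans h h' p hp := (h p hp).trans (h' p hp)
  sup h h' q hq := sup_apply_congr (fun p hp => h p fun hI => hq (I.lower hp hI))
    (fun p hp => h' p fun hI => hq (I.lower hp hI))
  inf h h' p hp := by rw [inf_apply, inf_apply, h p hp, h' p hp]

section Congruence

variable {r : PosetLat P → PosetLat P → Prop} (hr : IsLatticeCongruence r)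
include hr

theorem rel_single_top {p : P} {x : MThree} (hx : x ≠ ⊥) (h : r (single p x) ⊥) :
    r (single p ⊤) ⊥ := by
  obtain ⟨y, z, hxy, hyz, hxz⟩ := MThree.exists_simple x hx
  have h₁ := hr.sup h (hr.refl (single p y))
  rw [single_sup, hxy, bot_sup_eq] at h₁
  have h₂ := hr.inf h₁ (hr.refl (single p z))
  rw [single_inf, single_inf, single_same, top_inf_eq, hyz, single_bot] at h₂
  have h₃ := hr.sup h h₂
  rwa [single_sup, hxz, bot_sup_eq] at h₃

theorem rel_single_of_lt {p q : P} (hqp : q < p) (h : r (single p ⊤) ⊥) : r (single q ⊤) ⊥ := by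
  have h₁ := hr.inf (hr.refl (single q MThree.b)) (hr.sup (hr.refl (single q MThree.a)) h)
  have htop : (single q MThree.a ⊔ single p ⊤ : PosetLat P) q = ⊤ := by
    refine sup_apply_eq_top _ _ (p := p) ?_ hqp ?_
    · rw [single_same, single_ne hqp.ne]
      decide
    · rw [single_same, single_ne hqp.ne']
      decide
  rw [single_inf, single_inf, htop, sup_bot_eq, single_same, inf_top_eq,
    show MThree.b ⊓ MThree.a = ⊥ by decide, single_bot] at h₁
  exact rel_single_top hr (by decide) h₁

/-- The lower set of points at which a congruence collapses `M₃`. -/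
def collapsed : LowerSet P where
  carrier := {p | r (single p ⊤) ⊥}
  lower' p q hqp hp := by
    rcases hqp.eq_or_lt with rfl | hlt
    · exact hp
    · exact rel_single_of_lt hr hlt hp

theorem mem_collapsed {p : P} : p ∈ collapsed hr ↔ r (single p ⊤) ⊥ := Iff.rfl

theorem apply_le_of_rel {f g : PosetLat P} (h : r f g) {p : P} (hp : p ∉ collapsed hr) :
    f p ≤ g p := by
  by_contra hle
  obtain ⟨z, hz, hzf, hzg⟩ := MThree.exists_separating _ _ hle
  have h₁ := hr.inf (hr.refl (single p z)) h
  rw [single_inf, single_inf, inf_eq_left.2 hzf, hzg, single_bot] at h₁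
  exact hp (rel_single_top hr hz h₁)

theorem exists_greatest_rel_bot [Finite P] : ∃ k : PosetLat P, r k ⊥ ∧ ∀ f, r f ⊥ → f ≤ k := by
  classical
  have : Finite (PosetLat P) := Subtype.finite
  have := Fintype.ofFinite (PosetLat P)
  refine ⟨(Finset.univ.filter fun f => r f ⊥).sup id, ?_, fun f hf => ?_⟩
  · refine Finset.sup_induction (p := fun f => r f ⊥) (hr.refl ⊥) (fun f hf g hg => ?_)
      (fun f hf => (Finset.mem_filter.1 hf).2)
    simpa using hr.sup hf hg
  · exact Finset.le_sup (f := id) (Finset.mem_filter.2 ⟨Finset.mem_univ f, hf⟩)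

theorem eqOff_collapsed [Finite P] : EqOff (collapsed hr) = r := by
  funext f g
  refine propext ⟨fun h => ?_, fun h p hp =>
    (apply_le_of_rel hr h hp).antisymm (apply_le_of_rel hr (hr.symm h) hp)⟩
  obtain ⟨k, hk, hmax⟩ := exists_greatest_rel_bot hr
  have hk_top : ∀ p ∈ collapsed hr, k p = ⊤ := fun p hp =>
    top_le_iff.1 (single_le_iff.1 (hmax _ hp))
  have hk_bot : ∀ p, p ∉ collapsed hr → k p = ⊥ := fun p hp =>
    le_bot_iff.1 (apply_le_of_rel hr hk hp)
  have heq : f ⊔ k = g ⊔ k := by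
    refine DFunLike.ext _ _ fun p => ?_
    by_cases hp : p ∈ collapsed hr
    · have htop : ∀ e : PosetLat P, (e ⊔ k) p = ⊤ := fun e =>
        top_le_iff.1 ((hk_top p hp).ge.trans (le_sup_right.trans (le_sup_apply e k p)))
      rw [htop, htop]
    · have hbot : ∀ p', p ≤ p' → k p' = ⊥ := fun p' hpp' =>
        hk_bot p' fun hI => hp ((collapsed hr).lower hpp' hI)
      rw [sup_bot_apply_congr hbot, sup_bot_apply_congr hbot, h p hp]
  have hrel : ∀ e, r (e ⊔ k) e := fun e => by
    simpa using hr.sup (hr.refl e) hk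
  exact hr.trans (hr.symm (hrel f)) (heq ▸ hrel g)

end Congruence

theorem eqOff_le_iff {I J : LowerSet P} : EqOff I ≤ EqOff J ↔ I ≤ J := by
  refine ⟨fun h p hp => ?_, fun h f g hfg p hp => hfg p fun hI => hp (h hI)⟩
  by_contra hpJ
  have h₁ : EqOff I (single p ⊤) ⊥ := fun q hq => by
    rw [single_ne (fun hqp : q = p => hq (hqp.symm ▸ hp)), bot_apply]
  have h₂ := h _ _ h₁ p hpJ
  rw [single_same, bot_apply] at h₂
  exact MThree.bot_ne_top h₂.symm

/-- The isomorphism between the lower sets of `P` and the congruences of `PosetLat P`. -/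
noncomputable def congruenceIso [Finite P] :
    LowerSet P ≃o {r : PosetLat P → PosetLat P → Prop // IsLatticeCongruence r} :=
  RelIso.ofSurjective
    (OrderEmbedding.ofMapLEIff (fun I => ⟨EqOff I, eqOff_isLatticeCongruence I⟩)
      fun _ _ => eqOff_le_iff)
    fun r => ⟨collapsed r.2, Subtype.ext (eqOff_collapsed r.2)⟩

end PosetLat

/-- Every finite distributive lattice is isomorphic to the congruence lattice
(ordered by inclusion) of a finite sectionally complemented lattice. -/
theorem every_finite_distributive_lattice_is_congruence_lattice_of_sec_comp
    (D : Type*) [DistribLattice D] [Fintype D] [Nonempty D] :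
    ∃ (L : Type) (_ : Lattice L) (_ : Fintype L) (_ : OrderBot L),
      SectionallyComplemented L ∧
        Nonempty (D ≃o {r : L → L → Prop // IsLatticeCongruence r}) := by
  classical
  let _ : OrderBot D := Fintype.toOrderBot D
  -- The poset of join-irreducibles is moved to `Type`, where `L` has to live.
  let e := equivShrink.{0} {a : D // SupIrred a}
  let _ : PartialOrder (Shrink.{0} {a : D // SupIrred a}) := PartialOrder.lift e.symm e.symm.injective
  let e' : {a : D // SupIrred a} ≃o Shrink.{0} {a : D // SupIrred a} :=
    OrderIso.symm ⟨e.symm, Iff.rfl⟩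
  have : Finite (Shrink.{0} {a : D // SupIrred a}) := Finite.of_equiv _ e
  have : Finite (PosetLat (Shrink.{0} {a : D // SupIrred a})) := Subtype.finite
  exact ⟨PosetLat (Shrink.{0} {a : D // SupIrred a}), inferInstance, Fintype.ofFinite _,
    inferInstance, PosetLat.sectionallyComplemented,
    ⟨(OrderIso.lowerSetSupIrred.trans (LowerSet.map e')).trans PosetLat.congruenceIso⟩⟩
end

section
/- Let M be a chopped lattice having exactly two maximal elements m₁ and m₂, such that the principal ideals ↓m₁ and ↓m₂ (with the induced order) are sectionally complemented lattices, and such that p = m₁ ⊓ m₂ is an atom of M (i.e., p covers 0). Then the ideal lattice Id M, ordered by set inclusion, is a sectionally complemented lattice. -/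
/-!
Since `p = m₁ ⊓ m₂` is an atom, an ideal of `M` is the same as a pair `(x₁, x₂)` with `xᵢ ≤ mᵢ`
and `p ≤ x₁ ↔ p ≤ x₂`: the ideal is `↓x₁ ∪ ↓x₂` (`isChoppedIdeal_Iic_union`), and `xᵢ` is its
greatest element below `mᵢ` (`IsChoppedIdeal.exists_greatest_le`).

Let `U ≤ V` correspond to `(u₁, u₂)` and `(v₁, v₂)`, and let `sᵢ` be a sectional complement of `uᵢ`
in `vᵢ`. If `(s₁, s₂)` is compatible, it is a complement of `U` in `V`. Otherwise, say `p ≤ s₁` and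
`p ≰ s₂`. Replace `s₁` by a sectional complement `t` of `p` in `s₁`; the pair `(t, s₂)` is
compatible because `p` lies below neither component. The join of `U` with this ideal still is `V`:
it contains `u₂ ⊔ s₂ = v₂`, hence `p ≤ v₂`, hence `t ⊔ p = s₁`, hence `u₁ ⊔ s₁ = v₁`.

Meets of ideals are intersections, and joins are intersections of all ideals above both.
-/


/-- An ideal of a chopped lattice `M` (a finite meet-semilattice with `⊥` in which
any two elements with a common upper bound have a least upper bound): a subset
containing `⊥`, downward closed, and closed under existing joins. -/
def IsChoppedIdeal {M : Type*} [SemilatticeInf M] [OrderBot M] (I : Set M) : Prop :=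
  ⊥ ∈ I ∧ (∀ x ∈ I, ∀ y : M, y ≤ x → y ∈ I) ∧
    (∀ a ∈ I, ∀ b ∈ I, ∀ s : M, IsLUB {a, b} s → s ∈ I)

section

variable {M : Type*} [SemilatticeInf M] [OrderBot M]

lemma IsChoppedIdeal.inter {I J : Set M} (hI : IsChoppedIdeal I) (hJ : IsChoppedIdeal J) :
    IsChoppedIdeal (I ∩ J) :=
  ⟨⟨hI.1, hJ.1⟩, fun x hx y hy => ⟨hI.2.1 x hx.1 y hy, hJ.2.1 x hx.2 y hy⟩,
    fun a ha b hb s hs => ⟨hI.2.2 a ha.1 b hb.1 s hs, hJ.2.2 a ha.2 b hb.2 s hs⟩⟩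

lemma isChoppedIdeal_sInter {C : Set (Set M)} (hC : ∀ I ∈ C, IsChoppedIdeal I) :
    IsChoppedIdeal (⋂₀ C) :=
  ⟨fun I hI => (hC I hI).1, fun x hx y hy I hI => (hC I hI).2.1 x (hx I hI) y hy,
    fun a ha b hb s hs I hI => (hC I hI).2.2 a (ha I hI) b (hb I hI) s hs⟩

/-- The component of an ideal below `m`: by finiteness there is a maximal element of `I` below `m`,
and it is greatest because joins exist below `m`. -/
lemma IsChoppedIdeal.exists_greatest_le [Finite M]
    (hM : ∀ a b : M, (∃ c, a ≤ c ∧ b ≤ c) → ∃ s, IsLUB {a, b} s)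
    {I : Set M} (hI : IsChoppedIdeal I) (m : M) :
    ∃ v ∈ I, v ≤ m ∧ ∀ x ∈ I, x ≤ m → x ≤ v := by
  obtain ⟨v, hv⟩ := (Set.toFinite {x | x ∈ I ∧ x ≤ m}).exists_maximal ⟨⊥, hI.1, bot_le⟩
  refine ⟨v, hv.prop.1, hv.prop.2, fun x hx hxm => ?_⟩
  obtain ⟨s, hs⟩ := hM v x ⟨m, hv.prop.2, hxm⟩
  have hsm : s ≤ m := hs.2 (by simp [upperBounds, hv.prop.2, hxm])
  have hvs : v ≤ s := hs.1 (by simp)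
  have hxs : x ≤ s := hs.1 (by simp)
  exact hxs.trans (hv.le_of_ge ⟨hI.2.2 v hv.prop.1 x hx s hs, hsm⟩ hvs)

/-- A pair of elements below `m₁` and `m₂` that agrees on the atom `m₁ ⊓ m₂` spans the ideal
`↓t₁ ∪ ↓t₂`. -/
lemma isChoppedIdeal_Iic_union {m₁ m₂ t₁ t₂ : M} (hcov : ∀ x : M, x ≤ m₁ ∨ x ≤ m₂)
    (hatom : IsAtom (m₁ ⊓ m₂)) (h₁ : t₁ ≤ m₁) (h₂ : t₂ ≤ m₂)
    (hc : m₁ ⊓ m₂ ≤ t₁ ↔ m₁ ⊓ m₂ ≤ t₂) : IsChoppedIdeal (Set.Iic t₁ ∪ Set.Iic t₂) := by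
  -- Compatibility says that each component absorbs the part of the other one that it can see.
  have key : ∀ x, x ≤ m₁ → x ≤ m₂ → (x ≤ t₁ ↔ x ≤ t₂) := by
    intro x hx₁ hx₂
    rcases hatom.le_iff.1 (le_inf hx₁ hx₂) with rfl | rfl
    · simp
    · exact hc
  refine ⟨Or.inl bot_le, fun x hx y hy => hx.imp hy.trans hy.trans, fun a ha b hb s hs => ?_⟩
  have has : a ≤ s := hs.1 (by simp)
  have hbs : b ≤ s := hs.1 (by simp)
  rcases hcov s with h | h
  · have aux : ∀ x ∈ Set.Iic t₁ ∪ Set.Iic t₂, x ≤ s → x ≤ t₁ := fun x hx hxs =>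
      hx.elim id fun hx => (key x (hxs.trans h) (le_trans hx h₂)).2 hx
    exact Or.inl (hs.2 (by simp [upperBounds, aux a ha has, aux b hb hbs]))
  · have aux : ∀ x ∈ Set.Iic t₁ ∪ Set.Iic t₂, x ≤ s → x ≤ t₂ := fun x hx hxs =>
      hx.elim (fun hx => (key x (le_trans hx h₁) (hxs.trans h)).1 hx) id
    exact Or.inr (hs.2 (by simp [upperBounds, aux a ha has, aux b hb hbs]))

end

/-- The Atom Lemma: if a chopped lattice `M` has exactly two maximal elements
`m₁`, `m₂` whose principal ideals are sectionally complemented lattices, and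
`p = m₁ ⊓ m₂` is an atom, then the ideal lattice `Id M` (ordered by inclusion)
is a sectionally complemented lattice. -/
theorem atom_lemma {M : Type*} [SemilatticeInf M] [OrderBot M] [Fintype M]
    (hM : ∀ a b : M, (∃ c, a ≤ c ∧ b ≤ c) → ∃ s, IsLUB {a, b} s)
    (m₁ m₂ : M) (hne : m₁ ≠ m₂) (hmax₁ : IsMax m₁) (hmax₂ : IsMax m₂)
    (hcov : ∀ x : M, x ≤ m₁ ∨ x ≤ m₂)
    (hsc₁ : ∀ u v : M, u ≤ v → v ≤ m₁ →
      ∃ s, s ≤ m₁ ∧ u ⊓ s = ⊥ ∧ IsLUB {u, s} v)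
    (hsc₂ : ∀ u v : M, u ≤ v → v ≤ m₂ →
      ∃ s, s ≤ m₂ ∧ u ⊓ s = ⊥ ∧ IsLUB {u, s} v)
    (hatom : IsAtom (m₁ ⊓ m₂)) :
    (∀ I J : {I : Set M // IsChoppedIdeal I}, ∃ K, IsGLB {I, J} K) ∧
    (∀ I J : {I : Set M // IsChoppedIdeal I}, ∃ K, IsLUB {I, J} K) ∧
    (∀ U V : {I : Set M // IsChoppedIdeal I}, U ≤ V →
      ∃ S : {I : Set M // IsChoppedIdeal I},
        U.val ∩ S.val = {⊥} ∧ IsLUB {U, S} V) := by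
  refine ⟨fun I J => ⟨⟨I.1 ∩ J.1, I.2.inter J.2⟩, ?_⟩, fun I J => ?_, fun U V hUV => ?_⟩
  · refine ⟨?_, fun K hK => ?_⟩
    · rintro K (rfl | rfl)
      exacts [Set.inter_subset_left, Set.inter_subset_right]
    · exact Set.subset_inter (hK (Set.mem_insert _ _)) (hK (Set.mem_insert_of_mem _ rfl))
  · refine ⟨⟨⋂₀ {K | IsChoppedIdeal K ∧ I.1 ⊆ K ∧ J.1 ⊆ K},
      isChoppedIdeal_sInter fun K hK => hK.1⟩, ?_, fun K hK => ?_⟩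
    · rintro K (rfl | rfl)
      exacts [Set.subset_sInter fun L hL => hL.2.1, Set.subset_sInter fun L hL => hL.2.2]
    · exact Set.sInter_subset_of_mem
        ⟨K.2, hK (Set.mem_insert _ _), hK (Set.mem_insert_of_mem _ rfl)⟩
  · obtain ⟨u₁, hu₁, hum₁, hu₁'⟩ := U.2.exists_greatest_le hM m₁
    obtain ⟨u₂, hu₂, hum₂, hu₂'⟩ := U.2.exists_greatest_le hM m₂
    obtain ⟨v₁, hv₁, hvm₁, hv₁'⟩ := V.2.exists_greatest_le hM m₁
    obtain ⟨v₂, hv₂, hvm₂, hv₂'⟩ := V.2.exists_greatest_le hM m₂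
    obtain ⟨s₁, hsm₁, hd₁, hj₁⟩ := hsc₁ u₁ v₁ (hv₁' _ (hUV hu₁) hum₁) hvm₁
    obtain ⟨s₂, hsm₂, hd₂, hj₂⟩ := hsc₂ u₂ v₂ (hv₂' _ (hUV hu₂) hum₂) hvm₂
    have hsv₁ : s₁ ≤ v₁ := hj₁.1 (by simp)
    have hsv₂ : s₂ ≤ v₂ := hj₂.1 (by simp)
    -- Any compatible pair below `(s₁, s₂)` that generates `V` together with `U` is a complement.
    have finish : ∀ t₁ t₂, t₁ ≤ s₁ → t₂ ≤ s₂ → (m₁ ⊓ m₂ ≤ t₁ ↔ m₁ ⊓ m₂ ≤ t₂) →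
        (∀ W, IsChoppedIdeal W → U.1 ⊆ W → t₁ ∈ W → t₂ ∈ W → v₁ ∈ W ∧ v₂ ∈ W) →
        ∃ S : {I : Set M // IsChoppedIdeal I}, U.val ∩ S.val = {⊥} ∧ IsLUB {U, S} V := by
      intro t₁ t₂ ht₁ ht₂ hc hgen
      refine ⟨⟨_, isChoppedIdeal_Iic_union hcov hatom (ht₁.trans hsm₁) (ht₂.trans hsm₂) hc⟩,
        ?_, ?_, fun W hW => ?_⟩
      · refine Set.Subset.antisymm ?_ (Set.singleton_subset_iff.2 ⟨U.2.1, Or.inl bot_le⟩)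
        rintro x ⟨hxU, hx | hx⟩
        · have hx : x ≤ s₁ := le_trans hx ht₁
          exact le_bot_iff.1 (hd₁ ▸ le_inf (hu₁' x hxU (hx.trans hsm₁)) hx)
        · have hx : x ≤ s₂ := le_trans hx ht₂
          exact le_bot_iff.1 (hd₂ ▸ le_inf (hu₂' x hxU (hx.trans hsm₂)) hx)
      · rintro K (rfl | rfl)
        · exact hUV
        · rintro x (hx | hx)
          · exact V.2.2.1 v₁ hv₁ x (le_trans hx (ht₁.trans hsv₁))
          · exact V.2.2.1 v₂ hv₂ x (le_trans hx (ht₂.trans hsv₂))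
      · have hUW : U.1 ⊆ W.1 := hW (Set.mem_insert _ _)
        have hSW : Set.Iic t₁ ∪ Set.Iic t₂ ⊆ W.1 := hW (Set.mem_insert_of_mem _ rfl)
        obtain ⟨h₁, h₂⟩ := hgen W.1 W.2 hUW (hSW (Or.inl le_rfl)) (hSW (Or.inr le_rfl))
        intro x hx
        rcases hcov x with h | h
        · exact W.2.2.1 v₁ h₁ x (hv₁' x hx h)
        · exact W.2.2.1 v₂ h₂ x (hv₂' x hx h)
    by_cases hp₁ : m₁ ⊓ m₂ ≤ s₁ <;> by_cases hp₂ : m₁ ⊓ m₂ ≤ s₂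
    · exact finish s₁ s₂ le_rfl le_rfl (iff_of_true hp₁ hp₂) fun W hW hU h₁ h₂ =>
        ⟨hW.2.2 _ (hU hu₁) _ h₁ _ hj₁, hW.2.2 _ (hU hu₂) _ h₂ _ hj₂⟩
    · obtain ⟨t, -, hd, hj⟩ := hsc₁ _ s₁ hp₁ hsm₁
      have hpt : ¬ m₁ ⊓ m₂ ≤ t := fun h => hatom.1 (by rwa [inf_eq_left.2 h] at hd)
      refine finish t s₂ (hj.1 (by simp)) le_rfl (iff_of_false hpt hp₂) fun W hW hU h₁ h₂ => ?_
      have hv₂W := hW.2.2 _ (hU hu₂) _ h₂ _ hj₂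
      have hpW : m₁ ⊓ m₂ ∈ W := hW.2.1 _ hv₂W _
        (hv₂' _ (V.2.2.1 v₁ hv₁ _ (hp₁.trans hsv₁)) inf_le_right)
      exact ⟨hW.2.2 _ (hU hu₁) _ (hW.2.2 _ hpW _ h₁ _ hj) _ hj₁, hv₂W⟩
    · obtain ⟨t, -, hd, hj⟩ := hsc₂ _ s₂ hp₂ hsm₂
      have hpt : ¬ m₁ ⊓ m₂ ≤ t := fun h => hatom.1 (by rwa [inf_eq_left.2 h] at hd)
      refine finish s₁ t le_rfl (hj.1 (by simp)) (iff_of_false hp₁ hpt) fun W hW hU h₁ h₂ => ?_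
      have hv₁W := hW.2.2 _ (hU hu₁) _ h₁ _ hj₁
      have hpW : m₁ ⊓ m₂ ∈ W := hW.2.1 _ hv₁W _
        (hv₁' _ (V.2.2.1 v₂ hv₂ _ (hp₂.trans hsv₂)) inf_le_left)
      exact ⟨hv₁W, hW.2.2 _ (hU hu₂) _ (hW.2.2 _ hpW _ h₂ _ hj) _ hj₂⟩
    · exact finish s₁ s₂ le_rfl le_rfl (iff_of_false hp₁ hp₂) fun W hW hU h₁ h₂ =>
        ⟨hW.2.2 _ (hU hu₁) _ h₁ _ hj₁, hW.2.2 _ (hU hu₂) _ h₂ _ hj₂⟩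
end

section
/- Let M be a chopped lattice with exactly two maximal elements m₁ and m₂ (so every element of M lies below m₁ or below m₂), and let p = m₁ ⊓ m₂. Then the map sending an ideal I of M to the pair (a₁, a₂), where aᵢ is the largest element of I ∩ ↓mᵢ (i = 1, 2), is an order isomorphism from Id M (ordered by inclusion) onto the set of all compatible pairs {(a₁, a₂) : a₁ ≤ m₁, a₂ ≤ m₂, a₁ ⊓ p = a₂ ⊓ p} ordered componentwise. -/
theorem IsChoppedIdeal.exists_isGreatest {M : Type*} [SemilatticeInf M] [OrderBot M] [Finite M]
    (hM : ∀ a b : M, (∃ c, a ≤ c ∧ b ≤ c) → ∃ s, IsLUB {a, b} s)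
    {I : Set M} (hI : IsChoppedIdeal I) (m : M) :
    ∃ a, IsGreatest {x : M | x ∈ I ∧ x ≤ m} a := by
  obtain ⟨a, ha⟩ := (Set.toFinite {x : M | x ∈ I ∧ x ≤ m}).exists_maximal ⟨⊥, hI.1, bot_le⟩
  refine ⟨a, ha.prop, fun b hb => ?_⟩
  -- The join of `b` with the maximal element `a` stays in the set, so it equals `a`.
  obtain ⟨s, hs⟩ := hM a b ⟨m, ha.prop.2, hb.2⟩
  have has : a ≤ s := hs.1 (by simp)
  have hbs : b ≤ s := hs.1 (by simp)
  have hsm : s ≤ m := hs.2 (by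
    rintro x (rfl | rfl)
    exacts [ha.prop.2, hb.2])
  exact hbs.trans (ha.le_of_ge ⟨hI.2.2 a ha.prop.1 b hb.1 s hs, hsm⟩ has)

theorem le_of_compatible {M : Type*} [SemilatticeInf M] {m₁ m₂ a₁ a₂ x : M}
    (h₂ : a₂ ≤ m₂) (h : a₁ ⊓ (m₁ ⊓ m₂) = a₂ ⊓ (m₁ ⊓ m₂))
    (hx : x ≤ a₁ ∨ x ≤ a₂) (hxm : x ≤ m₁) : x ≤ a₁ := by
  rcases hx with hx | hx
  · exact hx
  · have : x ≤ a₂ ⊓ (m₁ ⊓ m₂) := le_inf hx (le_inf hxm (hx.trans h₂))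
    exact (h ▸ this).trans inf_le_left

/-- `le_of_compatible` with the roles of the two maximal elements exchanged. -/
theorem le_of_compatible' {M : Type*} [SemilatticeInf M] {m₁ m₂ a₁ a₂ x : M}
    (h₁ : a₁ ≤ m₁) (h : a₁ ⊓ (m₁ ⊓ m₂) = a₂ ⊓ (m₁ ⊓ m₂))
    (hx : x ≤ a₁ ∨ x ≤ a₂) (hxm : x ≤ m₂) : x ≤ a₂ :=
  le_of_compatible h₁ (by rw [inf_comm m₂ m₁, h]) hx.symm hxm

theorem isChoppedIdeal_of_compatible {M : Type*} [SemilatticeInf M] [OrderBot M]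
    {m₁ m₂ a₁ a₂ : M} (hcov : ∀ x : M, x ≤ m₁ ∨ x ≤ m₂) (h₁ : a₁ ≤ m₁) (h₂ : a₂ ≤ m₂)
    (h : a₁ ⊓ (m₁ ⊓ m₂) = a₂ ⊓ (m₁ ⊓ m₂)) :
    IsChoppedIdeal {x : M | x ≤ a₁ ∨ x ≤ a₂} := by
  refine ⟨Or.inl bot_le, fun x hx y hy => hx.imp hy.trans hy.trans, fun a ha b hb s hs => ?_⟩
  have has : a ≤ s := hs.1 (by simp)
  have hbs : b ≤ s := hs.1 (by simp)
  -- If `s ≤ mᵢ`, then `a` and `b` are below `mᵢ`, hence below `aᵢ`, and so is their join.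
  rcases hcov s with hsm | hsm
  · refine Or.inl (hs.2 ?_)
    rintro x (rfl | rfl)
    exacts [le_of_compatible h₂ h ha (has.trans hsm), le_of_compatible h₂ h hb (hbs.trans hsm)]
  · refine Or.inr (hs.2 ?_)
    rintro x (rfl | rfl)
    exacts [le_of_compatible' h₁ h ha (has.trans hsm), le_of_compatible' h₁ h hb (hbs.trans hsm)]

theorem IsChoppedIdeal.compatible {M : Type*} [SemilatticeInf M] [OrderBot M]
    {I : Set M} (hI : IsChoppedIdeal I) {m₁ m₂ a₁ a₂ : M}
    (h₁ : IsGreatest {x : M | x ∈ I ∧ x ≤ m₁} a₁)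
    (h₂ : IsGreatest {x : M | x ∈ I ∧ x ≤ m₂} a₂) :
    a₁ ⊓ (m₁ ⊓ m₂) = a₂ ⊓ (m₁ ⊓ m₂) := by
  apply le_antisymm
  · exact le_inf (h₂.2 ⟨hI.2.1 a₁ h₁.1.1 _ inf_le_left, inf_le_right.trans inf_le_right⟩)
      inf_le_right
  · exact le_inf (h₁.2 ⟨hI.2.1 a₂ h₂.1.1 _ inf_le_left, inf_le_right.trans inf_le_left⟩)
      inf_le_right

theorem IsChoppedIdeal.mem_iff {M : Type*} [SemilatticeInf M] [OrderBot M]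
    {I : Set M} (hI : IsChoppedIdeal I) {m₁ m₂ a₁ a₂ : M} (hcov : ∀ x : M, x ≤ m₁ ∨ x ≤ m₂)
    (h₁ : IsGreatest {x : M | x ∈ I ∧ x ≤ m₁} a₁)
    (h₂ : IsGreatest {x : M | x ∈ I ∧ x ≤ m₂} a₂) (x : M) :
    x ∈ I ↔ x ≤ a₁ ∨ x ≤ a₂ := by
  constructor
  · exact fun hx => (hcov x).imp (fun h => h₁.2 ⟨hx, h⟩) (fun h => h₂.2 ⟨hx, h⟩)
  · rintro (hx | hx)
    exacts [hI.2.1 _ h₁.1.1 _ hx, hI.2.1 _ h₂.1.1 _ hx]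

/-- For a chopped lattice `M` with exactly two maximal elements `m₁` and `m₂`
(so every element is below `m₁` or below `m₂`), and `p = m₁ ⊓ m₂`, the map
`I ↦ (a₁, a₂)`, with `aᵢ` the largest element of `I ∩ ↓mᵢ`, is an order
isomorphism from `Id M` onto the set of compatible pairs
`{(a₁, a₂) : a₁ ≤ m₁, a₂ ≤ m₂, a₁ ⊓ p = a₂ ⊓ p}` ordered componentwise. -/
theorem idealLattice_orderIso_compatible_pairs {M : Type*} [SemilatticeInf M]
    [OrderBot M] [Fintype M]
    (hM : ∀ a b : M, (∃ c, a ≤ c ∧ b ≤ c) → ∃ s, IsLUB {a, b} s)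
    (m₁ m₂ : M) (hne : m₁ ≠ m₂) (hmax₁ : IsMax m₁) (hmax₂ : IsMax m₂)
    (hcov : ∀ x : M, x ≤ m₁ ∨ x ≤ m₂) :
    ∃ f : {I : Set M // IsChoppedIdeal I} ≃o
        {a : {x : M // x ≤ m₁} × {x : M // x ≤ m₂} //
          a.1.val ⊓ (m₁ ⊓ m₂) = a.2.val ⊓ (m₁ ⊓ m₂)},
      ∀ I : {I : Set M // IsChoppedIdeal I},
        IsGreatest {x : M | x ∈ I.val ∧ x ≤ m₁} (f I).val.1.val ∧
        IsGreatest {x : M | x ∈ I.val ∧ x ≤ m₂} (f I).val.2.val := by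
  have hex₁ : ∀ I : {I : Set M // IsChoppedIdeal I},
      ∃ a, IsGreatest {x : M | x ∈ I.val ∧ x ≤ m₁} a := fun I => I.2.exists_isGreatest hM m₁
  have hex₂ : ∀ I : {I : Set M // IsChoppedIdeal I},
      ∃ a, IsGreatest {x : M | x ∈ I.val ∧ x ≤ m₂} a := fun I => I.2.exists_isGreatest hM m₂
  choose g₁ hg₁ using hex₁
  choose g₂ hg₂ using hex₂
  refine ⟨{
    toFun := fun I => ⟨(⟨g₁ I, (hg₁ I).1.2⟩, ⟨g₂ I, (hg₂ I).1.2⟩), I.2.compatible (hg₁ I) (hg₂ I)⟩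
    invFun := fun a => ⟨{x | x ≤ a.1.1.1 ∨ x ≤ a.1.2.1},
      isChoppedIdeal_of_compatible hcov a.1.1.2 a.1.2.2 a.2⟩
    left_inv := fun I => Subtype.ext <| Set.ext fun x =>
      (I.2.mem_iff hcov (hg₁ I) (hg₂ I) x).symm
    right_inv := ?_
    map_rel_iff' := ?_ }, fun I => ⟨hg₁ I, hg₂ I⟩⟩
  · rintro ⟨⟨⟨a₁, h₁⟩, ⟨a₂, h₂⟩⟩, h⟩
    refine Subtype.ext (Prod.ext (Subtype.ext ?_) (Subtype.ext ?_))
    · exact (hg₁ _).unique ⟨⟨Or.inl le_rfl, h₁⟩, fun x hx => le_of_compatible h₂ h hx.1 hx.2⟩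
    · exact (hg₂ _).unique ⟨⟨Or.inr le_rfl, h₂⟩, fun x hx => le_of_compatible' h₁ h hx.1 hx.2⟩
  · intro I J
    constructor
    · rintro ⟨h₁, h₂⟩ x hx
      exact (J.2.mem_iff hcov (hg₁ J) (hg₂ J) x).2
        (((I.2.mem_iff hcov (hg₁ I) (hg₂ I) x).1 hx).imp
          (fun h => h.trans h₁) (fun h => h.trans h₂))
    · intro h
      exact ⟨(hg₁ J).2 ⟨h (hg₁ I).1.1, (hg₁ I).1.2⟩, (hg₂ J).2 ⟨h (hg₂ I).1.1, (hg₂ I).1.2⟩⟩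
end

section
/- For any chopped lattice M, the lattice of congruences of M (ordered by inclusion) is isomorphic to the lattice of congruences of the ideal lattice Id M (ordered by inclusion). -/
/-- A congruence of a chopped lattice: an equivalence relation preserving meets,
and preserving joins whenever both joins exist. -/
structure IsChoppedCongruence {M : Type*} [SemilatticeInf M] (r : M → M → Prop) :
    Prop where
  refl : ∀ a, r a a
  symm : ∀ {a b}, r a b → r b a
  trans : ∀ {a b c}, r a b → r b c → r a c
  inf : ∀ {a b c d}, r a b → r c d → r (a ⊓ c) (b ⊓ d)
  sup : ∀ {a b c d s t}, r a b → r c d → IsLUB {a, c} s → IsLUB {b, d} t → r s t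

/-- A congruence of a lattice, phrased order-theoretically (on a lattice,
`IsGLB {a, c} (a ⊓ c)` and `IsLUB {a, c} (a ⊔ c)`, so this is the usual notion
of lattice congruence): an equivalence relation preserving binary meets and
binary joins. -/
structure IsLatticeCongruenceOn {α : Type*} [Preorder α] (r : α → α → Prop) :
    Prop where
  refl : ∀ a, r a a
  symm : ∀ {a b}, r a b → r b a
  trans : ∀ {a b c}, r a b → r b c → r a c
  inf : ∀ {a b c d s t}, r a b → r c d → IsGLB {a, c} s → IsGLB {b, d} t → r s t
  sup : ∀ {a b c d s t}, r a b → r c d → IsLUB {a, c} s → IsLUB {b, d} t → r s t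

namespace ChoppedLattice

variable {M : Type*} [SemilatticeInf M] [OrderBot M]

/-- The ideals of `M`, ordered by inclusion. -/
abbrev ChoppedIdeal (M : Type*) [SemilatticeInf M] [OrderBot M] :=
  {I : Set M // IsChoppedIdeal I}

/-- The principal ideal `↓a`. -/
def principal (a : M) : ChoppedIdeal M :=
  ⟨Set.Iic a, bot_le, fun _ hx _ hy => hy.trans hx, fun b hb c hc s hs =>
    hs.2 (by rintro z (rfl | rfl) <;> assumption)⟩

/-- The intersection of two ideals, which is their meet in the ideal lattice. -/
def inter (I J : ChoppedIdeal M) : ChoppedIdeal M :=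
  ⟨I.1 ∩ J.1, ⟨I.2.1, J.2.1⟩,
    fun x hx y hy => ⟨I.2.2.1 x hx.1 y hy, J.2.2.1 x hx.2 y hy⟩,
    fun a ha b hb s hs => ⟨I.2.2.2 a ha.1 b hb.1 s hs, J.2.2.2 a ha.2 b hb.2 s hs⟩⟩

/-- The ideal generated by the union of two ideals, which is their join in the ideal lattice. -/
def join (I J : ChoppedIdeal M) : ChoppedIdeal M :=
  ⟨{x | ∀ K : ChoppedIdeal M, I ≤ K → J ≤ K → x ∈ K.1},
    fun K _ _ => K.2.1,
    fun x hx y hy K hI hJ => K.2.2.1 x (hx K hI hJ) y hy,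
    fun a ha b hb s hs K hI hJ => K.2.2.2 a (ha K hI hJ) b (hb K hI hJ) s hs⟩

lemma isGLB_inter (I J : ChoppedIdeal M) : IsGLB {I, J} (inter I J) := by
  refine ⟨?_, fun K hK x hx => ⟨hK (Set.mem_insert _ _) hx, hK (Set.mem_insert_of_mem _ rfl) hx⟩⟩
  rintro K (rfl | rfl)
  · exact fun x hx => hx.1
  · exact fun x hx => hx.2

lemma isLUB_join (I J : ChoppedIdeal M) : IsLUB {I, J} (join I J) := by
  refine ⟨?_, fun K hK x hx => hx K (hK (Set.mem_insert _ _)) (hK (Set.mem_insert_of_mem _ rfl))⟩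
  rintro K (rfl | rfl)
  · exact fun x hx L hI _ => hI hx
  · exact fun x hx L _ hJ => hJ hx

lemma principal_le_iff {a : M} {I : ChoppedIdeal M} : principal a ≤ I ↔ a ∈ I.1 :=
  ⟨fun h => h (le_refl a), fun h x hx => I.2.2.1 a h x hx⟩

lemma isGLB_principal (a b : M) : IsGLB {principal a, principal b} (principal (a ⊓ b)) := by
  convert isGLB_inter (principal a) (principal b)
  exact Subtype.ext Set.Iic_inter_Iic.symm

lemma isLUB_principal {a b s : M} (h : IsLUB {a, b} s) :
    IsLUB {principal a, principal b} (principal s) := by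
  refine ⟨?_, fun K hK => principal_le_iff.2 ?_⟩
  · rintro K (rfl | rfl)
    · exact principal_le_iff.2 (h.1 (Set.mem_insert _ _))
    · exact principal_le_iff.2 (h.1 (Set.mem_insert_of_mem _ rfl))
  · exact K.2.2.2 a (principal_le_iff.1 (hK (Set.mem_insert _ _)))
      b (principal_le_iff.1 (hK (Set.mem_insert_of_mem _ rfl))) s h

/-- The extension of a relation on `M` to ideals: each element of either ideal is related to some
element of the other. -/
def extendRel (r : M → M → Prop) (I J : ChoppedIdeal M) : Prop :=
  (∀ x ∈ I.1, ∃ y ∈ J.1, r x y) ∧ (∀ y ∈ J.1, ∃ x ∈ I.1, r y x)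

/-- The restriction of a relation on ideals to `M`, along `a ↦ ↓a`. -/
def restrictRel (R : ChoppedIdeal M → ChoppedIdeal M → Prop) (a b : M) : Prop :=
  R (principal a) (principal b)

lemma exists_le_of_rel {r : M → M → Prop} (hr : IsChoppedCongruence r) {J : ChoppedIdeal M} {x : M}
    (h : ∃ y ∈ J.1, r x y) : ∃ y ∈ J.1, y ≤ x ∧ r x y := by
  obtain ⟨y, hy, hxy⟩ := h
  refine ⟨x ⊓ y, J.2.2.1 y hy _ inf_le_right, inf_le_left, ?_⟩
  simpa using hr.inf (hr.refl x) hxy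

lemma saturation_isChoppedIdeal
    (hM : ∀ a b : M, (∃ c, a ≤ c ∧ b ≤ c) → ∃ s, IsLUB {a, b} s)
    {r : M → M → Prop} (hr : IsChoppedCongruence r) (J : ChoppedIdeal M) :
    IsChoppedIdeal {x | ∃ y ∈ J.1, r x y} := by
  refine ⟨⟨⊥, J.2.1, hr.refl _⟩, ?_, ?_⟩
  · rintro x ⟨y, hy, hxy⟩ z hz
    refine ⟨z ⊓ y, J.2.2.1 y hy _ inf_le_right, ?_⟩
    simpa [inf_eq_left.2 hz] using hr.inf (hr.refl z) hxy
  · intro a ha b hb s hs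
    obtain ⟨a', ha', haa, hra⟩ := exists_le_of_rel hr ha
    obtain ⟨b', hb', hbb, hrb⟩ := exists_le_of_rel hr hb
    obtain ⟨t, ht⟩ := hM a' b' ⟨s, haa.trans (hs.1 (Set.mem_insert _ _)),
      hbb.trans (hs.1 (Set.mem_insert_of_mem _ rfl))⟩
    exact ⟨t, J.2.2.2 a' ha' b' hb' t ht, hr.sup hra hrb hs ht⟩

lemma extendRel_isLatticeCongruenceOn
    (hM : ∀ a b : M, (∃ c, a ≤ c ∧ b ≤ c) → ∃ s, IsLUB {a, b} s)
    {r : M → M → Prop} (hr : IsChoppedCongruence r) :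
    IsLatticeCongruenceOn (extendRel r) := by
  have inf_half : ∀ {A B C D S T : ChoppedIdeal M}, extendRel r A B → extendRel r C D →
      IsGLB {A, C} S → IsGLB {B, D} T → ∀ x ∈ S.1, ∃ y ∈ T.1, r x y := by
    intro A B C D S T hAB hCD hS hT x hx
    obtain ⟨y, hy, hyx, hxy⟩ := exists_le_of_rel hr
      (hAB.1 x (hS.1 (Set.mem_insert _ _) hx))
    obtain ⟨z, hz, hzx, hxz⟩ := exists_le_of_rel hr
      (hCD.1 x (hS.1 (Set.mem_insert_of_mem _ rfl) hx))
    refine ⟨y ⊓ z, hT.2 (isGLB_inter B D).1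
      ⟨B.2.2.1 y hy _ inf_le_left, D.2.2.1 z hz _ inf_le_right⟩, ?_⟩
    simpa using hr.inf hxy hxz
  have sup_half : ∀ {A B C D S T : ChoppedIdeal M}, extendRel r A B → extendRel r C D →
      IsLUB {A, C} S → IsLUB {B, D} T → ∀ x ∈ S.1, ∃ y ∈ T.1, r x y := by
    intro A B C D S T hAB hCD hS hT
    let sat : ChoppedIdeal M := ⟨_, saturation_isChoppedIdeal hM hr T⟩
    suffices h : S ≤ sat from fun x hx => h hx
    refine hS.2 ?_
    rintro K (rfl | rfl) x hx
    · obtain ⟨y, hy, hxy⟩ := hAB.1 x hx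
      exact ⟨y, hT.1 (Set.mem_insert _ _) hy, hxy⟩
    · obtain ⟨y, hy, hxy⟩ := hCD.1 x hx
      exact ⟨y, hT.1 (Set.mem_insert_of_mem _ rfl) hy, hxy⟩
  have trans_half : ∀ {A B C : ChoppedIdeal M}, extendRel r A B → extendRel r B C →
      ∀ x ∈ A.1, ∃ y ∈ C.1, r x y := by
    intro A B C hAB hBC x hx
    obtain ⟨y, hy, hxy⟩ := hAB.1 x hx
    obtain ⟨z, hz, hyz⟩ := hBC.1 y hy
    exact ⟨z, hz, hr.trans hxy hyz⟩
  have symm' : ∀ {A B : ChoppedIdeal M}, extendRel r A B → extendRel r B A :=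
    fun h => ⟨h.2, h.1⟩
  exact
    { refl := fun I => ⟨fun x hx => ⟨x, hx, hr.refl x⟩, fun x hx => ⟨x, hx, hr.refl x⟩⟩
      symm := symm'
      trans := fun h k => ⟨trans_half h k, trans_half (symm' k) (symm' h)⟩
      inf := fun h k hs ht => ⟨inf_half h k hs ht, inf_half (symm' h) (symm' k) ht hs⟩
      sup := fun h k hs ht => ⟨sup_half h k hs ht, sup_half (symm' h) (symm' k) ht hs⟩ }

lemma restrictRel_isChoppedCongruence {R : ChoppedIdeal M → ChoppedIdeal M → Prop}
    (hR : IsLatticeCongruenceOn R) : IsChoppedCongruence (restrictRel R) where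
  refl _ := hR.refl _
  symm h := hR.symm h
  trans h k := hR.trans h k
  inf h k := hR.inf h k (isGLB_principal _ _) (isGLB_principal _ _)
  sup h k hs ht := hR.sup h k (isLUB_principal hs) (isLUB_principal ht)

lemma restrictRel_extendRel {r : M → M → Prop} (hr : IsChoppedCongruence r) :
    restrictRel (extendRel r) = r := by
  -- If `a` is related to an element below `b`, it is related to `a ⊓ b`.
  have meet : ∀ {a b y : M}, y ≤ b → r a y → r a (a ⊓ b) := by
    intro a b y hy h
    have h' := hr.inf h (hr.refl b)
    rw [inf_eq_left.2 hy] at h'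
    exact hr.trans h (hr.symm h')
  have below : ∀ {a b : M}, r a b → ∀ x ≤ a, ∃ y ≤ b, r x y := by
    intro a b h x hx
    refine ⟨x ⊓ b, inf_le_right, ?_⟩
    simpa [inf_eq_left.2 hx] using hr.inf (hr.refl x) h
  funext a b
  refine propext ⟨fun h => ?_, fun h => ⟨below h, below (hr.symm h)⟩⟩
  obtain ⟨y, hy, hay⟩ := h.1 a (le_refl a)
  obtain ⟨x, hx, hbx⟩ := h.2 b (le_refl b)
  have hb := meet hx hbx
  rw [inf_comm] at hb
  exact hr.trans (meet hy hay) (hr.symm hb)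

lemma exists_greatest_below [Finite M]
    (hM : ∀ a b : M, (∃ c, a ≤ c ∧ b ≤ c) → ∃ s, IsLUB {a, b} s) (J : ChoppedIdeal M) (x : M) :
    ∃ y ∈ J.1, y ≤ x ∧ inter (principal x) J = principal y := by
  obtain ⟨y, ⟨hyJ, hyx⟩, hmax⟩ := (Set.toFinite {z | z ∈ J.1 ∧ z ≤ x}).exists_maximal
    ⟨⊥, J.2.1, bot_le⟩
  refine ⟨y, hyJ, hyx, le_antisymm ?_ (principal_le_iff.2 ⟨hyx, hyJ⟩)⟩
  rintro z ⟨hzx, hzJ⟩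
  obtain ⟨s, hs⟩ := hM y z ⟨x, hyx, hzx⟩
  have hsx : s ≤ x := hs.2 (by rintro w (rfl | rfl) <;> assumption)
  exact (hs.1 (Set.mem_insert_of_mem _ rfl)).trans
    (hmax ⟨J.2.2.2 y hyJ z hzJ s hs, hsx⟩ (hs.1 (Set.mem_insert _ _)))

lemma rel_inter_of_forall_exists [Finite M] {R : ChoppedIdeal M → ChoppedIdeal M → Prop}
    (hR : IsLatticeCongruenceOn R) {I J : ChoppedIdeal M}
    (h : ∀ x ∈ I.1, ∃ y ∈ J.1, restrictRel R x y) : R I (inter I J) := by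
  obtain ⟨K, ⟨hIJ, hKI, hK⟩, hmax⟩ :=
    (Set.toFinite {K | inter I J ≤ K ∧ K ≤ I ∧ R K (inter I J)}).exists_maximal
      ⟨inter I J, le_refl _, fun x hx => hx.1, hR.refl _⟩
  have hIK : I ≤ K := by
    intro x hx
    obtain ⟨y, hyJ, hyx, hxy⟩ := exists_le_of_rel (restrictRel_isChoppedCongruence hR) (h x hx)
    have hub := (isLUB_join (principal x) K).1
    have hle : K ≤ join (principal x) K := hub (Set.mem_insert_of_mem _ rfl)
    -- Joining `↓x ~ ↓y` with `K ~ I ∩ J` changes nothing on the right, as `y ∈ I ∩ J`.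
    have hlub : IsLUB {principal y, inter I J} (inter I J) := by
      refine ⟨?_, fun L hL => hL (Set.mem_insert_of_mem _ rfl)⟩
      rintro L (rfl | rfl)
      · exact principal_le_iff.2 ⟨I.2.2.1 x hx y hyx, hyJ⟩
      · exact le_refl _
    refine hmax ⟨hIJ.trans hle, ?_, hR.sup hxy hK (isLUB_join _ _) hlub⟩ hle
      (principal_le_iff.1 (hub (Set.mem_insert _ _)))
    refine (isLUB_join (principal x) K).2 ?_
    rintro L (rfl | rfl)
    · exact principal_le_iff.2 hx
    · exact hKI
  rwa [le_antisymm hKI hIK] at hK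

lemma extendRel_restrictRel [Finite M]
    (hM : ∀ a b : M, (∃ c, a ≤ c ∧ b ≤ c) → ∃ s, IsLUB {a, b} s)
    {R : ChoppedIdeal M → ChoppedIdeal M → Prop} (hR : IsLatticeCongruenceOn R) :
    extendRel (restrictRel R) = R := by
  have half : ∀ {I J : ChoppedIdeal M}, R I J → ∀ x ∈ I.1, ∃ y ∈ J.1, restrictRel R x y := by
    intro I J h x hx
    obtain ⟨y, hyJ, hyx, hy⟩ := exists_greatest_below hM J x
    refine ⟨y, hyJ, ?_⟩
    have hI : IsGLB {principal x, I} (principal x) := by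
      refine ⟨?_, fun L hL => hL (Set.mem_insert _ _)⟩
      rintro L (rfl | rfl)
      · exact le_refl _
      · exact principal_le_iff.2 hx
    exact hR.inf (hR.refl (principal x)) h hI (hy ▸ isGLB_inter (principal x) J)
  funext I J
  refine propext ⟨fun h => ?_, fun h => ⟨half h, half (hR.symm h)⟩⟩
  have h1 := rel_inter_of_forall_exists hR h.1
  have h2 := rel_inter_of_forall_exists hR h.2
  have hcomm : inter J I = inter I J := Subtype.ext (Set.inter_comm _ _)
  exact hR.trans h1 (hR.symm (hcomm ▸ h2))

end ChoppedLattice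

/-- For a chopped lattice `M`, the lattice of congruences of `M` (ordered by
inclusion) is isomorphic to the lattice of congruences of the ideal lattice
`Id M` (ordered by inclusion). -/
theorem choppedCongruences_orderIso_idealLatticeCongruences {M : Type*}
    [SemilatticeInf M] [OrderBot M] [Fintype M]
    (hM : ∀ a b : M, (∃ c, a ≤ c ∧ b ≤ c) → ∃ s, IsLUB {a, b} s) :
    Nonempty ({r : M → M → Prop // IsChoppedCongruence r} ≃o
      {r : {I : Set M // IsChoppedIdeal I} → {I : Set M // IsChoppedIdeal I} → Prop //
        IsLatticeCongruenceOn r}) := by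
  exact ⟨Equiv.toOrderIso
    { toFun := fun r => ⟨ChoppedLattice.extendRel r.1,
        ChoppedLattice.extendRel_isLatticeCongruenceOn hM r.2⟩
      invFun := fun R => ⟨ChoppedLattice.restrictRel R.1,
        ChoppedLattice.restrictRel_isChoppedCongruence R.2⟩
      left_inv := fun r => Subtype.ext (ChoppedLattice.restrictRel_extendRel r.2)
      right_inv := fun R => Subtype.ext (ChoppedLattice.extendRel_restrictRel hM R.2) }
    (fun r s hrs I J h =>
      ⟨fun x hx => (h.1 x hx).imp fun y hy => ⟨hy.1, hrs x y hy.2⟩,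
        fun x hx => (h.2 x hx).imp fun y hy => ⟨hy.1, hrs x y hy.2⟩⟩)
    (fun R S hRS a b h => hRS _ _ h)⟩
end
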